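/- The partition function satisfies the Hardy–Ramanujan asymptotic: lim_{n→∞} p(n)/L(n) = 1, where L(n) = (1/(4n√3))·exp(π√(2n/3)). -/

import Mathlib

open scoped Real

noncomputable section

/-- `p n` is the number of partitions of `n`. -/
def partitionCount (n : ℕ) : ℕ := Fintype.card (Nat.Partition n)

/-- `L(n) = (1/(4n√3)) exp(π√(2n/3))`. -/
def hardyRamanujanL (n : ℕ) : ℝ :=
  1 / (4 * n * Real.sqrt 3) * Real.exp (Real.pi * Real.sqrt (2 * n / 3))

/-- The partition generating function as a product. -/
def PF (q : ℂ) : ℂ := (∏' k : ℕ, (1 - q ^ (k + 1)))⁻¹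

section L1
open PowerSeries Finset Filter Topology

/-- The power series `∑ X^{dj}`. -/
def geomPS (d : ℕ) : ℝ⟦X⟧ := PowerSeries.mk fun n => if d ∣ n then 1 else 0

lemma geomPS_mul (d : ℕ) (hd : 0 < d) : geomPS d * (1 - X ^ d) = 1 := by
  ext n
  rw [mul_sub, mul_one, map_sub, PowerSeries.coeff_mul_X_pow', PowerSeries.coeff_one]
  simp only [geomPS, PowerSeries.coeff_mk]
  by_cases h : d ≤ n
  · obtain ⟨k, rfl⟩ := Nat.exists_eq_add_of_le h
    have : d + k ≠ 0 := by omega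
    have h3 : ¬ (d = 0 ∧ k = 0) := by omega
    simp [h3]
  · rcases Nat.eq_zero_or_pos n with rfl | hn
    · simp [hd.ne']
    · have : ¬ d ∣ n := fun h' => h (Nat.le_of_dvd hn h')
      simp [this, h, hn.ne']

open PowerSeries.WithPiTopology in
lemma tsum_eq_geomPS (d : ℕ) (hd : 0 < d) : ∑' j : ℕ, (X : ℝ⟦X⟧) ^ (d * j) = geomPS d := by
  have h1 : (∑' j : ℕ, (X : ℝ⟦X⟧) ^ (d * j)) * (1 - X ^ d) = 1 := by
    simp_rw [pow_mul]
    exact tsum_pow_mul_one_sub_of_constantCoeff_eq_zero (by simp [hd.ne'])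
  have h2 := geomPS_mul d hd
  calc _ = (∑' j : ℕ, (X : ℝ⟦X⟧) ^ (d * j)) * (geomPS d * (1 - X ^ d)) := by rw [h2, mul_one]
    _ = geomPS d * ((∑' j : ℕ, (X : ℝ⟦X⟧) ^ (d * j)) * (1 - X ^ d)) := by ring
    _ = _ := by rw [h1, mul_one]

/-- Finite product of geometric power series. -/
def finPS (m : ℕ) : ℝ⟦X⟧ := ∏ i ∈ range m, geomPS (i + 1)

open PowerSeries.WithPiTopology in
lemma tendsto_coeff_finPS (n : ℕ) :
    Tendsto (fun m => coeff n (finPS m)) atTop (𝓝 (partitionCount n : ℝ)) := by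
  have h := Nat.Partition.hasProd_powerSeriesMk_card_restricted ℝ (fun _ => True)
  have h2 := h.tendsto_prod_nat
  rw [WithPiTopology.tendsto_iff_coeff_tendsto] at h2
  have h3 := h2 n
  simp only [if_true, coeff_mk] at h3
  have e : (#(Nat.Partition.restricted n fun _ => True)) = partitionCount n := by
    simp [Nat.Partition.restricted, partitionCount]
  rw [e] at h3
  refine h3.congr fun m => ?_
  rw [finPS]
  congr 1
  refine Finset.prod_congr rfl fun i _ => tsum_eq_geomPS _ (by omega)

lemma finPS_succ (m : ℕ) : finPS (m + 1) = finPS m * geomPS (m + 1) := by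
  rw [finPS, prod_range_succ, finPS]

lemma geomPS_nonneg (d n : ℕ) : 0 ≤ coeff n (geomPS d) := by
  simp only [geomPS, coeff_mk]; split_ifs <;> norm_num

lemma finPS_nonneg (m n : ℕ) : 0 ≤ coeff n (finPS m) := by
  induction m generalizing n with
  | zero => simp [finPS, coeff_one]; split_ifs <;> norm_num
  | succ m ih =>
    rw [finPS_succ, coeff_mul]
    exact sum_nonneg fun p _ => mul_nonneg (ih _) (geomPS_nonneg _ _)

lemma finPS_mono (n : ℕ) : Monotone (fun m => coeff n (finPS m)) := by
  refine monotone_nat_of_le_succ fun m => ?_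
  rw [finPS_succ, coeff_mul]
  have := single_le_sum (f := fun p : ℕ × ℕ => coeff p.1 (finPS m) * coeff p.2 (geomPS (m+1)))
    (s := antidiagonal n) (fun p _ => mul_nonneg (finPS_nonneg _ _) (geomPS_nonneg _ _))
    (show (n, 0) ∈ antidiagonal n by simp)
  simpa [geomPS] using this

lemma finPS_le (m n : ℕ) : coeff n (finPS m) ≤ partitionCount n :=
  (finPS_mono n).ge_of_tendsto (tendsto_coeff_finPS n) m

lemma ps_mul_aux (f g : ℝ⟦X⟧) (q : ℂ) (a b : ℂ)
    (hf : Summable fun n => ‖((coeff n f : ℝ) : ℂ) * q ^ n‖)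
    (hg : Summable fun n => ‖((coeff n g : ℝ) : ℂ) * q ^ n‖)
    (hfa : HasSum (fun n => ((coeff n f : ℝ) : ℂ) * q ^ n) a)
    (hgb : HasSum (fun n => ((coeff n g : ℝ) : ℂ) * q ^ n) b) :
    (Summable fun n => ‖((coeff n (f * g) : ℝ) : ℂ) * q ^ n‖) ∧
    HasSum (fun n => ((coeff n (f * g) : ℝ) : ℂ) * q ^ n) (a * b) := by
  have e : ∀ n, ((coeff n (f * g) : ℝ) : ℂ) * q ^ n = ∑ kl ∈ antidiagonal n,
      (((coeff kl.1 f : ℝ) : ℂ) * q ^ kl.1) * (((coeff kl.2 g : ℝ) : ℂ) * q ^ kl.2) := by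
    intro n
    rw [coeff_mul]
    push_cast
    rw [sum_mul]
    refine sum_congr rfl fun p hp => ?_
    rw [← mem_antidiagonal.1 hp]
    ring
  have h1 := summable_norm_sum_mul_antidiagonal_of_summable_norm hf hg
  have h2 := tsum_mul_tsum_eq_tsum_sum_antidiagonal_of_summable_norm hf hg
  simp_rw [e]
  refine ⟨h1, ?_⟩
  rw [← hfa.tsum_eq, ← hgb.tsum_eq, h2]
  exact h1.of_norm.hasSum

lemma geomPS_hasSum (d : ℕ) (hd : 0 < d) (q : ℂ) (hq : ‖q‖ < 1) :
    (Summable fun n => ‖((coeff n (geomPS d) : ℝ) : ℂ) * q ^ n‖) ∧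
    HasSum (fun n => ((coeff n (geomPS d) : ℝ) : ℂ) * q ^ n) (1 - q ^ d)⁻¹ := by
  have hs : Summable fun n => ‖((coeff n (geomPS d) : ℝ) : ℂ) * q ^ n‖ := by
    refine Summable.of_nonneg_of_le (fun _ => norm_nonneg _) (fun n => ?_)
      (summable_geometric_of_lt_one (norm_nonneg q) hq)
    simp only [geomPS, coeff_mk]
    split_ifs <;> simp
  refine ⟨hs, ?_⟩
  have hqd : ‖q ^ d‖ < 1 := by rw [norm_pow]; exact pow_lt_one₀ (norm_nonneg _) hq hd.ne'
  have h := hasSum_geometric_of_norm_lt_one hqd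
  have hinj : Function.Injective (fun j : ℕ => d * j) := fun a b hab => Nat.eq_of_mul_eq_mul_left hd hab
  rw [← hinj.hasSum_iff]
  · have e : ((fun n => ((coeff n (geomPS d) : ℝ) : ℂ) * q ^ n) ∘ fun j : ℕ => d * j)
        = fun j => (q ^ d) ^ j := by
      ext j
      simp [geomPS, pow_mul]
    rw [e]
    exact h
  · intro x hx
    have : ¬ d ∣ x := fun ⟨j, hj⟩ => hx ⟨j, hj.symm⟩
    simp [geomPS, this]

lemma finPS_hasSum (m : ℕ) (q : ℂ) (hq : ‖q‖ < 1) :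
    (Summable fun n => ‖((coeff n (finPS m) : ℝ) : ℂ) * q ^ n‖) ∧
    HasSum (fun n => ((coeff n (finPS m) : ℝ) : ℂ) * q ^ n) (∏ i ∈ range m, (1 - q ^ (i + 1)))⁻¹ := by
  induction m with
  | zero =>
    have e : (fun n => ((coeff n (finPS 0) : ℝ) : ℂ) * q ^ n) = fun n => if n = 0 then 1 else 0 := by
      ext n
      simp only [finPS, range_zero, prod_empty, coeff_one]
      split_ifs with h <;> simp [h]
    have e' : (fun n => ‖((coeff n (finPS 0) : ℝ) : ℂ) * q ^ n‖) = fun n => if n = 0 then 1 else 0 := by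
      ext n
      rw [congrFun e n]
      split_ifs with h <;> simp
    rw [e, e']
    refine ⟨(hasSum_ite_eq 0 _).summable, ?_⟩
    simpa using hasSum_ite_eq 0 (1:ℂ)
  | succ m ih =>
    rw [finPS_succ, prod_range_succ, mul_inv]
    have := geomPS_hasSum (m + 1) (by omega) q hq
    exact ps_mul_aux _ _ q _ _ ih.1 this.1 ih.2 this.2

lemma PF_prod_ne_zero (q : ℂ) (hq : ‖q‖ < 1) : ∏' k : ℕ, (1 - q ^ (k + 1)) ≠ 0 := by
  refine tprod_one_add_ne_zero_of_summable (f := fun n : ℕ ↦ -q ^ (n + 1)) ?_ ?_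
  · intro i h
    have h' : q ^ (i + 1) = 1 := by linear_combination -h
    have : ‖q ^ (i + 1)‖ < 1 := by rw [norm_pow]; exact pow_lt_one₀ (norm_nonneg _) hq (by omega)
    rw [h'] at this; simp at this
  · simpa using (summable_nat_add_iff 1).mpr (summable_geometric_of_lt_one (norm_nonneg _) hq)

lemma tendsto_prod_PF (q : ℂ) (hq : ‖q‖ < 1) :
    Tendsto (fun m => (∏ i ∈ range m, (1 - q ^ (i + 1)))⁻¹) atTop (𝓝 (PF q)) := by
  refine Tendsto.inv₀ ?_ (PF_prod_ne_zero q hq)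
  exact (ModularForm.multipliable_one_sub_pow hq).hasProd.tendsto_prod_nat

lemma summable_partCount (r : ℝ) (hr0 : 0 ≤ r) (hr : r < 1) :
    Summable fun n => (partitionCount n : ℝ) * r ^ n := by
  have hq : ‖(r : ℂ)‖ < 1 := by simpa [abs_of_nonneg hr0] using hr
  have hc := (tendsto_prod_PF (r : ℂ) hq).norm
  refine summable_of_sum_range_le (c := ‖PF r‖) (fun n => by positivity) fun M => ?_
  have h1 : Tendsto (fun m => ∑ n ∈ range M, coeff n (finPS m) * r ^ n) atTop
      (𝓝 (∑ n ∈ range M, (partitionCount n : ℝ) * r ^ n)) :=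
    tendsto_finsetSum _ fun n _ => (tendsto_coeff_finPS n).mul_const _
  refine le_of_tendsto_of_tendsto' h1 hc fun m => ?_
  obtain ⟨hs, hh⟩ := finPS_hasSum m (r : ℂ) hq
  have e : ∀ n, ‖((coeff n (finPS m) : ℝ) : ℂ) * (r : ℂ) ^ n‖ = coeff n (finPS m) * r ^ n := by
    intro n
    simp [abs_of_nonneg hr0, abs_of_nonneg (finPS_nonneg m n)]
  rw [← hh.tsum_eq]
  have e2 : ∑' n, ((coeff n (finPS m) : ℝ) : ℂ) * (r : ℂ) ^ n
      = ((∑' n, coeff n (finPS m) * r ^ n : ℝ) : ℂ) := by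
    push_cast; rfl
  rw [e2, Complex.norm_real]
  simp_rw [e] at hs
  exact (hs.sum_le_tsum _ (fun n _ => mul_nonneg (finPS_nonneg _ _) (pow_nonneg hr0 _))).trans
    (le_abs_self _)

lemma hasSum_partition (q : ℂ) (hq : ‖q‖ < 1) :
    HasSum (fun n => (partitionCount n : ℂ) * q ^ n) (PF q) := by
  have hs := summable_partCount ‖q‖ (norm_nonneg _) hq
  have hs' : Summable (fun n => (partitionCount n : ℂ) * q ^ n) := by
    refine Summable.of_norm ?_
    simpa using hs
  have h := tendsto_tsum_of_dominated_convergence (𝓕 := atTop)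
    (f := fun m n => ((coeff n (finPS m) : ℝ) : ℂ) * q ^ n)
    (g := fun n => (partitionCount n : ℂ) * q ^ n) hs
    (fun n => by
      have := ((Complex.continuous_ofReal.tendsto _).comp (tendsto_coeff_finPS n)).mul_const (q ^ n)
      simpa using this)
    (Eventually.of_forall fun m n => by
      rw [norm_mul, norm_pow, Complex.norm_real, Real.norm_eq_abs, abs_of_nonneg (finPS_nonneg m n)]
      exact mul_le_mul_of_nonneg_right (finPS_le m n) (by positivity))
  have h2 := tendsto_prod_PF q hq
  simp_rw [(finPS_hasSum _ q hq).2.tsum_eq] at h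
  rw [tendsto_nhds_unique h2 h]
  exact hs'.hasSum

end L1

section L2
open Complex Filter Topology MeasureTheory

lemma norm_exp_neg_lt_one {w : ℂ} (hw : 0 < w.re) : ‖cexp (-w)‖ < 1 := by
  rw [Complex.norm_exp]; simpa using hw

lemma PF_differentiableOn : DifferentiableOn ℂ PF (Metric.ball 0 1) := by
  refine ModularForm.differentiableOn_tprod_one_sub_pow.inv fun q hq => ?_
  exact PF_prod_ne_zero q (by simpa using hq)

lemma PF_continuousAt {q : ℂ} (hq : ‖q‖ < 1) : ContinuousAt PF q :=
  (PF_differentiableOn.differentiableAt (Metric.isOpen_ball.mem_nhds (by simpa using hq))).continuousAt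

lemma PF_zero : PF 0 = 1 := by simp [PF]

lemma PF_ne_zero {q : ℂ} (hq : ‖q‖ < 1) : PF q ≠ 0 := inv_ne_zero (PF_prod_ne_zero q hq)

lemma PF_exp_continuous {X : Type*} [TopologicalSpace X] {f : X → ℂ} (hf : Continuous f)
    (h : ∀ x, 0 < (f x).re) : Continuous fun x => PF (cexp (-(f x))) := by
  rw [continuous_iff_continuousAt]
  intro x
  have : ContinuousAt (fun x => cexp (-(f x))) x := by fun_prop
  exact ContinuousAt.comp (g := PF) (PF_continuousAt (norm_exp_neg_lt_one (h x))) this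

lemma integral_exp_int (k : ℤ) : ∫ θ in (-π)..π, cexp (k * θ * I) = if k = 0 then 2 * π else 0 := by
  split_ifs with hk
  · simp [hk]; ring
  · have hc : (k : ℂ) * I ≠ 0 := by simp [hk]
    have h := integral_exp_mul_complex (a := -π) (b := π) hc
    have e : ∀ θ : ℝ, cexp (k * θ * I) = cexp (k * I * θ) := fun θ => by ring_nf
    simp_rw [e]
    rw [h]
    have : cexp (k * I * (π : ℝ)) = cexp (k * I * (-π : ℝ)) := by
      rw [Complex.exp_eq_exp_iff_exists_int]
      exact ⟨k, by push_cast; ring⟩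
    rw [this]; simp

lemma cauchy_formula (n : ℕ) (t : ℝ) (ht : 0 < t) :
    (partitionCount n : ℂ) = (1 / (2 * π)) *
      ∫ θ in (-π)..π, PF (cexp (-(t - θ * I))) * cexp (n * (t - θ * I)) := by
  have hre : ∀ θ : ℝ, ((t : ℂ) - θ * I).re = t := by intro θ; simp
  have hr : ∀ θ : ℝ, ‖cexp (-((t : ℂ) - θ * I))‖ = Real.exp (-t) := by
    intro θ; rw [Complex.norm_exp]; simp
  have hlt : Real.exp (-t) < 1 := by simpa using ht
  have hsum : HasSum (fun m : ℕ => ∫ θ in (-π)..π,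
      ((partitionCount m : ℂ) * cexp (-(t - θ * I)) ^ m) * cexp (n * (t - θ * I)))
      (∫ θ in (-π)..π, PF (cexp (-(t - θ * I))) * cexp (n * (t - θ * I))) := by
    refine intervalIntegral.hasSum_integral_of_dominated_convergence
      (fun m _ => (partitionCount m * Real.exp (-t) ^ m) * Real.exp (n * t)) ?_ ?_ ?_ ?_ ?_
    · intro m
      apply Continuous.aestronglyMeasurable
      fun_prop
    · intro m
      refine Eventually.of_forall fun θ _ => ?_
      rw [norm_mul, norm_mul, norm_pow, hr, Complex.norm_exp]
      simp
    · refine Eventually.of_forall fun θ _ => ?_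
      exact (summable_partCount _ (Real.exp_pos _).le hlt).mul_right _
    · exact intervalIntegrable_const
    · refine Eventually.of_forall fun θ _ => ?_
      exact (hasSum_partition _ (by rw [hr]; exact hlt)).mul_right _
  have hterm : ∀ m : ℕ, ∫ θ in (-π)..π,
      ((partitionCount m : ℂ) * cexp (-(t - θ * I)) ^ m) * cexp (n * (t - θ * I))
      = if m = n then (2 * π) * (partitionCount n : ℂ) else 0 := by
    intro m
    have e : ∀ θ : ℝ, ((partitionCount m : ℂ) * cexp (-(t - θ * I)) ^ m) * cexp (n * (t - θ * I))
      = ((partitionCount m : ℂ) * cexp ((n - m) * t)) * cexp (((m - n : ℤ) : ℂ) * θ * I) := by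
      intro θ
      rw [← Complex.exp_nat_mul, mul_assoc, mul_assoc, ← Complex.exp_add, ← Complex.exp_add]
      congr 2
      push_cast
      ring
    simp_rw [e]
    rw [intervalIntegral.integral_const_mul, integral_exp_int]
    by_cases h : m = n
    · subst h; simp; ring
    · have : ¬ ((m : ℤ) - n = 0) := by omega
      simp only [this, h, if_false, ofReal_zero, mul_zero]
  simp_rw [hterm] at hsum
  have := hsum.unique (hasSum_ite_eq n _)
  rw [this]
  have hp : (π : ℂ) ≠ 0 := by exact_mod_cast Real.pi_ne_zero
  field_simp

lemma eta_eq (w : ℂ) : ModularForm.eta (I * w / (2 * π)) = cexp (-w / 24) * (PF (cexp (-w)))⁻¹ := by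
  have hp : (π : ℂ) ≠ 0 := by exact_mod_cast Real.pi_ne_zero
  unfold ModularForm.eta PF
  rw [inv_inv]
  congr 1
  · rw [Function.Periodic.qParam]
    congr 1
    field_simp
    push_cast
    rw [I_sq]; ring
  · refine tprod_congr fun n => ?_
    rw [ModularForm.eta_q_eq_pow]
    congr 3
    field_simp
    rw [I_sq]; ring

lemma sqrt_I_mul {w : ℂ} (hw : 0 < w.re) : (sqrt I)⁻¹ * sqrt (I * w) = sqrt w := by
  have hw0 : w ≠ 0 := by rintro rfl; simp at hw
  have hI : sqrt I ≠ 0 := by rw [sqrt_eq_exp I_ne_zero]; exact exp_ne_zero _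
  have ha := abs_lt.1 (Complex.abs_arg_lt_pi_div_two_iff.2 (Or.inl hw))
  have hlog : log (I * w) = log I + log w := by
    refine Complex.log_mul I_ne_zero hw0 ?_
    rw [arg_I]
    constructor <;> linarith [Real.pi_pos]
  rw [inv_mul_eq_iff_eq_mul₀ hI, sqrt_eq_exp (mul_ne_zero I_ne_zero hw0), sqrt_eq_exp I_ne_zero,
    sqrt_eq_exp hw0, hlog, ← Complex.exp_add]
  congr 1
  ring

lemma PF_transform {w : ℂ} (hw : 0 < w.re) :
    PF (cexp (-w)) = sqrt (w / (2 * π)) * cexp (π ^ 2 / (6 * w) - w / 24)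
      * PF (cexp (-(4 * π ^ 2 / w))) := by
  have hp : (π : ℂ) ≠ 0 := by exact_mod_cast Real.pi_ne_zero
  have hw0 : w ≠ 0 := by rintro rfl; simp at hw
  have hz : I * w / (2 * π) ∈ UpperHalfPlane.upperHalfPlaneSet := by
    have : (I * w / (2 * π)).im = w.re / (2 * π) := by
      rw [show (2 * π : ℂ) = ((2 * π : ℝ) : ℂ) by push_cast; rfl, Complex.div_ofReal_im]
      simp
    show 0 < (I * w / (2 * π)).im
    rw [this]; positivity
  have h := ModularForm.eta_comp_eq_csqrt_I_inv hz
  simp only [Function.comp, Pi.smul_apply, Pi.mul_apply, smul_eq_mul] at h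
  have e1 : -1 / (I * w / (2 * π)) = I * (4 * π ^ 2 / w) / (2 * π) := by
    field_simp
    rw [I_sq]; ring
  rw [e1, eta_eq, eta_eq, ← mul_assoc,
    show I * w / (2 * π) = I * (w / (2 * π)) by ring, sqrt_I_mul] at h
  swap
  · rw [show (2 * π : ℂ) = ((2 * π : ℝ) : ℂ) by push_cast; rfl, Complex.div_ofReal_re]
    positivity
  have hw' : 0 < (4 * π ^ 2 / w).re := by
    rw [show (4 * π ^ 2 / w : ℂ) = ((4 * π ^ 2 : ℝ) : ℂ) * w⁻¹ by push_cast; rfl, Complex.re_ofReal_mul,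
      Complex.inv_re]
    have : 0 < normSq w := normSq_pos.2 hw0
    positivity
  have n1 := PF_ne_zero (norm_exp_neg_lt_one hw)
  have n2 := PF_ne_zero (norm_exp_neg_lt_one hw')
  have e2 : π ^ 2 / (6 * w) - w / 24 = -w / 24 - (-(4 * π ^ 2 / w) / 24) := by
    field_simp; ring
  rw [e2, Complex.exp_sub]
  have n3 := Complex.exp_ne_zero (-(4 * π ^ 2 / w) / 24)
  set a := PF (cexp (-w))
  set b := PF (cexp (-(4 * π ^ 2 / w)))
  set c := cexp (-(4 * π ^ 2 / w) / 24)
  set d := cexp (-w / 24)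
  set s := sqrt (w / (2 * π))
  field_simp at h ⊢
  linear_combination h

end L2

section L3
open Complex Filter Topology MeasureTheory

lemma csqrt_sq (z : ℂ) : sqrt z ^ 2 = z := by
  by_cases hz : z = 0
  · simp [hz, sqrt]
  · rw [sqrt_eq_exp hz, ← Complex.exp_nat_mul]
    rw [show ((2 : ℕ) : ℂ) * (log z / 2) = log z by push_cast; ring, exp_log hz]

lemma inv_one_sub_bound {z : ℂ} (hz : ‖z‖ < 1) :
    ‖(1 - z)⁻¹‖ ≤ ‖(1 - (‖z‖ : ℂ))⁻¹‖ * Real.exp (z.re - ‖z‖) := by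
  have h1 : (1 - z) ≠ 0 := by
    intro h
    have : z = 1 := by linear_combination -h
    rw [this] at hz; simp at hz
  have hr : ‖((‖z‖ : ℝ) : ℂ)‖ < 1 := by simpa using hz
  have h2 : (1 - (‖z‖ : ℂ)) ≠ 0 := by
    intro h
    have : ((‖z‖ : ℝ) : ℂ) = 1 := by linear_combination -h
    rw [this] at hr; simp at hr
  have s1 := hasSum_re (hasSum_taylorSeries_neg_log hz)
  have s2 := hasSum_re (hasSum_taylorSeries_neg_log hr)
  have s3 := s2.sub s1
  have key := le_hasSum s3 1 (fun j _ => by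
    have : (z ^ j / (j : ℂ)).re ≤ ((‖z‖ : ℂ) ^ j / (j : ℂ)).re := by
      calc (z ^ j / (j : ℂ)).re ≤ ‖z ^ j / (j : ℂ)‖ := re_le_norm _
        _ = ‖z‖ ^ j / j := by simp
        _ = (((‖z‖ ^ j / j : ℝ)) : ℂ).re := by rw [ofReal_re]
        _ = _ := by push_cast; rfl
    linarith)
  simp only [pow_one, Nat.cast_one, div_one, neg_re, log_re, ofReal_re] at key
  rw [norm_inv, norm_inv]
  have p1 : 0 < ‖1 - z‖ := norm_pos_iff.2 h1
  have p2 : 0 < ‖1 - (‖z‖ : ℂ)‖ := norm_pos_iff.2 h2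
  rw [← Real.exp_log p1, ← Real.exp_log p2, ← Real.exp_neg, ← Real.exp_neg, ← Real.exp_add,
    Real.exp_le_exp]
  linarith

lemma PF_bound {q : ℂ} (hq : ‖q‖ < 1) :
    ‖PF q‖ ≤ ‖PF (‖q‖ : ℂ)‖ * Real.exp ((q / (1 - q)).re - ‖q‖ / (1 - ‖q‖)) := by
  have hr : ‖((‖q‖ : ℝ) : ℂ)‖ < 1 := by simpa using hq
  have t1 := (tendsto_prod_PF q hq).norm
  have t2 := (tendsto_prod_PF _ hr).norm
  have g1 : Tendsto (fun m => ∑ i ∈ Finset.range m, ((q ^ (i + 1)).re - ‖q‖ ^ (i + 1))) atTop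
      (𝓝 ((q / (1 - q)).re - ‖q‖ / (1 - ‖q‖))) := by
    have a1 := hasSum_re ((hasSum_geometric_of_norm_lt_one hq).mul_left q)
    have a2 := (hasSum_geometric_of_lt_one (norm_nonneg q) hq).mul_left ‖q‖
    have a3 := (a1.sub a2).tendsto_sum_nat
    simp_rw [← pow_succ', ← div_eq_mul_inv] at a3
    exact a3
  refine le_of_tendsto_of_tendsto' t1 (t2.mul ((Real.continuous_exp.tendsto _).comp g1)) fun m => ?_
  simp only [Function.comp]
  rw [Real.exp_sum, ← Finset.prod_inv_distrib, ← Finset.prod_inv_distrib, norm_prod, norm_prod,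
    ← Finset.prod_mul_distrib]
  refine Finset.prod_le_prod (fun _ _ => norm_nonneg _) fun i _ => ?_
  have hqi : ‖q ^ (i + 1)‖ < 1 := by
    rw [norm_pow]; exact pow_lt_one₀ (norm_nonneg _) hq (by omega)
  have := inv_one_sub_bound hqi
  rw [norm_pow] at this
  push_cast at this
  exact this

lemma one_sub_lower {t θ : ℝ} (ht : 0 < t) (ht1 : t ≤ 1) (h1 : 2 * π * t < |θ|) (h2 : |θ| ≤ π) :
    2 * t ≤ ‖1 - cexp (-(t - θ * I))‖ := by
  have hr : 1 / 4 ≤ Real.exp (-t) := by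
    have := Real.add_one_le_exp (-(t/2))
    have e : Real.exp (-t) = Real.exp (-(t/2)) * Real.exp (-(t/2)) := by
      rw [← Real.exp_add]; congr 1; ring
    rw [e]; nlinarith
  set r := Real.exp (-t) with hrdef
  have e : cexp (-(t - θ * I)) = r * (Real.cos θ + Real.sin θ * I) := by
    rw [hrdef, show -((t:ℂ) - θ * I) = ((-t : ℝ) : ℂ) + θ * I by push_cast; ring, Complex.exp_add,
      Complex.exp_mul_I]
    push_cast; rfl
  have hsq : ‖1 - cexp (-(t - θ * I))‖ ^ 2 = (1 - r) ^ 2 + 4 * r * Real.sin (|θ| / 2) ^ 2 := by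
    have hc : Real.cos θ = 1 - 2 * Real.sin (|θ| / 2) ^ 2 := by
      rw [← Real.cos_abs, show |θ| = 2 * (|θ| / 2) by ring, Real.cos_two_mul, Real.cos_sq']
      ring_nf
    rw [e, ← Complex.normSq_eq_norm_sq, Complex.normSq_apply]
    simp [-ofReal_cos, -ofReal_sin]
    have hs := Real.sin_sq_add_cos_sq θ
    have : (1 - r * Real.cos θ) * (1 - r * Real.cos θ) + r * Real.sin θ * (r * Real.sin θ)
      = 1 - 2 * r * Real.cos θ + r ^ 2 := by linear_combination r ^ 2 * hs
    rw [this, hc]; ring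
  have hsin : |θ| / π ≤ Real.sin (|θ| / 2) := by
    have := Real.mul_le_sin (x := |θ| / 2) (by positivity) (by linarith)
    calc |θ| / π = 2 / π * (|θ| / 2) := by ring
      _ ≤ _ := this
  have hsin2 : 2 * t ≤ Real.sin (|θ| / 2) := by
    refine le_trans ?_ hsin
    rw [le_div_iff₀ Real.pi_pos]; linarith
  rw [← pow_le_pow_iff_left₀ (by positivity) (norm_nonneg _) two_ne_zero, hsq]
  have h4 : (2 * t) ^ 2 ≤ Real.sin (|θ| / 2) ^ 2 := by gcongr
  nlinarith [sq_nonneg (1 - r), sq_nonneg (Real.sin (|θ| / 2))]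

lemma PF_small : ∃ δ > 0, ∀ q : ℂ, ‖q‖ < δ → ‖PF q‖ ≤ 2 := by
  have h : ContinuousAt PF 0 := PF_continuousAt (by simp)
  have h2 : ∀ᶠ q in 𝓝 (0:ℂ), ‖PF q‖ < 2 := by
    have := h.norm
    refine this.eventually (gt_mem_nhds ?_)
    simp [PF_zero]
  obtain ⟨δ, hδ, H⟩ := Metric.eventually_nhds_iff.1 h2
  exact ⟨δ, hδ, fun q hq => (H (by simpa using hq)).le⟩

lemma minor_bound : ∃ t₀ > 0, ∀ t θ : ℝ, 0 < t → t < t₀ → 2 * π * t < |θ| → |θ| ≤ π →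
    ‖PF (cexp (-(t - θ * I)))‖ ≤ 2 * Real.exp (π ^ 2 / (6 * t) - 1 / (8 * t)) := by
  obtain ⟨δ, hδ, hP⟩ := PF_small
  refine ⟨min 1 (min (2 * π) (4 * π ^ 2 * δ)), by positivity, fun t θ ht ht' h1 h2 => ?_⟩
  have ht1 : t ≤ 1 := (ht'.trans_le (min_le_left _ _)).le
  have htp : t ≤ 2 * π := (ht'.trans_le ((min_le_right _ _).trans (min_le_left _ _))).le
  have htd : t < 4 * π ^ 2 * δ := ht'.trans_le ((min_le_right _ _).trans (min_le_right _ _))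
  have hr : ‖cexp (-(t - θ * I))‖ = Real.exp (-t) := by
    rw [Complex.norm_exp]; simp
  have hlt : Real.exp (-t) < 1 := by simpa using ht
  have hr4 : 1 / 4 ≤ Real.exp (-t) := by
    have := Real.add_one_le_exp (-(t/2))
    have e : Real.exp (-t) = Real.exp (-(t/2)) * Real.exp (-(t/2)) := by
      rw [← Real.exp_add]; congr 1; ring
    rw [e]; nlinarith
  have hl := one_sub_lower ht ht1 h1 h2
  have hb := PF_bound (q := cexp (-(t - θ * I))) (by rw [hr]; exact hlt)
  rw [hr] at hb
  -- the value at the real point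
  have hreal : ‖PF ((Real.exp (-t) : ℝ) : ℂ)‖ ≤ 2 * Real.exp (π ^ 2 / (6 * t)) := by
    have hw : 0 < ((t : ℝ) : ℂ).re := by simpa using ht
    have hT := PF_transform hw
    rw [show ((Real.exp (-t) : ℝ) : ℂ) = cexp (-(t : ℂ)) by push_cast; rfl, hT, norm_mul, norm_mul]
    have n1 : ‖sqrt ((t : ℂ) / (2 * π))‖ ≤ 1 := by
      have hs : sqrt ((t : ℂ) / (2 * π)) ^ 2 = (t : ℂ) / (2 * π) := csqrt_sq _
      have hs2 := congrArg norm hs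
      rw [norm_pow] at hs2
      have : ‖(t : ℂ) / (2 * π)‖ ≤ 1 := by
        rw [show (t : ℂ) / (2 * π) = ((t / (2 * π) : ℝ) : ℂ) by push_cast; rfl, norm_real,
          Real.norm_eq_abs, abs_of_nonneg (by positivity), div_le_one (by positivity)]
        exact htp
      rw [← hs2] at this
      exact (pow_le_one_iff_of_nonneg (norm_nonneg _) (by norm_num)).1 this
    have n2 : ‖cexp (π ^ 2 / (6 * t) - t / 24)‖ ≤ Real.exp (π ^ 2 / (6 * t)) := by
      rw [show (π : ℂ) ^ 2 / (6 * t) - t / 24 = ((π ^ 2 / (6 * t) - t / 24 : ℝ) : ℂ) by push_cast; rfl,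
        Complex.norm_exp, ofReal_re, Real.exp_le_exp]
      linarith
    have n3 : ‖PF (cexp (-(4 * π ^ 2 / t)))‖ ≤ 2 := by
      apply hP
      rw [show -(4 * (π : ℂ) ^ 2 / t) = ((-(4 * π ^ 2 / t) : ℝ) : ℂ) by push_cast; rfl,
        Complex.norm_exp, ofReal_re]
      have hx : 0 < 4 * π ^ 2 / t := by positivity
      calc Real.exp (-(4 * π ^ 2 / t)) ≤ (4 * π ^ 2 / t)⁻¹ := by
            rw [Real.exp_neg]
            exact inv_anti₀ hx (by linarith [Real.add_one_le_exp (4 * π ^ 2 / t)])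
        _ < δ := by
            rw [inv_div, div_lt_iff₀ (by positivity)]; linarith
    calc _ ≤ 1 * Real.exp (π ^ 2 / (6 * t)) * 2 := by gcongr
      _ = _ := by ring
  refine hb.trans ?_
  rw [sub_eq_add_neg (π ^ 2 / (6 * t)), Real.exp_add, ← mul_assoc]
  refine mul_le_mul hreal ?_ (Real.exp_pos _).le (by positivity)
  rw [Real.exp_le_exp]
  have k1 : (cexp (-(t - θ * I)) / (1 - cexp (-(t - θ * I)))).re ≤ Real.exp (-t) / (2 * t) := by
    refine (re_le_norm _).trans ?_
    rw [norm_div, hr]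
    gcongr
  have k2 : Real.exp (-t) / t ≤ Real.exp (-t) / (1 - Real.exp (-t)) := by
    have : 0 < 1 - Real.exp (-t) := by linarith
    gcongr
    linarith [Real.add_one_le_exp (-t)]
  have k3 : 1 / (8 * t) ≤ Real.exp (-t) / t - Real.exp (-t) / (2 * t) := by
    have : Real.exp (-t) / t - Real.exp (-t) / (2 * t) = Real.exp (-t) / (2 * t) := by
      field_simp; ring
    rw [this, div_le_div_iff₀ (by positivity) (by positivity)]
    nlinarith
  linarith

end L3

section L4
open Complex Filter Topology MeasureTheory

/-- Rescaled saddle variable. -/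
def ZZ (ε v : ℝ) : ℂ := 1 - ε * v * I

/-- Normalised integrand. -/
def HH (ε v : ℝ) : ℂ :=
  PF (cexp (-((π ^ 2 * ε ^ 2 / 6 : ℝ) * ZZ ε v))) * cexp (ZZ ε v / ε ^ 2) /
    ((ε * √(π / 12) * Real.exp (2 / ε ^ 2) : ℝ) : ℂ)

/-- Half-length of the rescaled integration range. -/
def RR (ε : ℝ) : ℝ := 6 / (π * ε ^ 3)

/-- The rescaled integral. -/
def JJ (ε : ℝ) : ℂ := ∫ v, (Set.Ioc (-RR ε) (RR ε)).indicator (HH ε) v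

lemma ZZ_re (ε v : ℝ) : (ZZ ε v).re = 1 := by simp [ZZ]
lemma ZZ_im (ε v : ℝ) : (ZZ ε v).im = -(ε * v) := by simp [ZZ]
lemma ZZ_ne (ε v : ℝ) : ZZ ε v ≠ 0 := by
  intro h; have := ZZ_re ε v; rw [h] at this; simp at this
lemma ZZ_normSq (ε v : ℝ) : normSq (ZZ ε v) = 1 + (ε * v) ^ 2 := by
  rw [normSq_apply, ZZ_re, ZZ_im]; ring
lemma ZZ_inv_re (ε v : ℝ) : ((ZZ ε v)⁻¹).re = 1 / (1 + (ε * v) ^ 2) := by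
  rw [inv_re, ZZ_re, ZZ_normSq]

lemma csqrt_ofReal_mul {c : ℝ} (hc : 0 < c) {z : ℂ} (hz : z ≠ 0) :
    sqrt ((c : ℂ) * z) = (√c : ℝ) * sqrt z := by
  have hc' : (c : ℂ) ≠ 0 := by exact_mod_cast hc.ne'
  rw [sqrt_eq_exp (mul_ne_zero hc' hz), sqrt_eq_exp hz, Complex.log_ofReal_mul hc hz,
    Real.sqrt_eq_rpow, Real.rpow_def_of_pos hc]
  push_cast
  rw [← Complex.exp_add]
  congr 1
  ring

lemma HH_eq {ε : ℝ} (hε : 0 < ε) (v : ℝ) :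
    HH ε v = sqrt (ZZ ε v) * cexp (-(v ^ 2 * (ZZ ε v)⁻¹)) *
      cexp (-((π ^ 2 * ε ^ 2 / 144 : ℝ) * ZZ ε v)) * PF (cexp (-((24 / ε ^ 2 : ℝ) * (ZZ ε v)⁻¹))) := by
  have hZ := ZZ_ne ε v
  have hp : (π : ℂ) ≠ 0 := by exact_mod_cast Real.pi_ne_zero
  have hε' : (ε : ℂ) ≠ 0 := by exact_mod_cast hε.ne'
  have hw : 0 < (((π ^ 2 * ε ^ 2 / 6 : ℝ) : ℂ) * ZZ ε v).re := by
    rw [re_ofReal_mul, ZZ_re]; positivity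
  have hs : sqrt ((((π ^ 2 * ε ^ 2 / 6 : ℝ) : ℂ) * ZZ ε v) / (2 * π)) =
      ((ε * √(π / 12) : ℝ) : ℂ) * sqrt (ZZ ε v) := by
    have e : (((π ^ 2 * ε ^ 2 / 6 : ℝ) : ℂ) * ZZ ε v) / (2 * π)
        = ((ε ^ 2 * (π / 12) : ℝ) : ℂ) * ZZ ε v := by
      push_cast; field_simp; ring
    rw [e, csqrt_ofReal_mul (by positivity) hZ, Real.sqrt_mul (by positivity), Real.sqrt_sq hε.le]
  have hq : (4 * π ^ 2 / (((π ^ 2 * ε ^ 2 / 6 : ℝ) : ℂ) * ZZ ε v)) = (24 / ε ^ 2 : ℝ) * (ZZ ε v)⁻¹ := by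
    push_cast; field_simp; ring
  have hx : cexp (π ^ 2 / (6 * (((π ^ 2 * ε ^ 2 / 6 : ℝ) : ℂ) * ZZ ε v))
        - ((π ^ 2 * ε ^ 2 / 6 : ℝ) : ℂ) * ZZ ε v / 24) * cexp (ZZ ε v / ε ^ 2)
      = cexp (-(v ^ 2 * (ZZ ε v)⁻¹)) * cexp (-((π ^ 2 * ε ^ 2 / 144 : ℝ) * ZZ ε v)) *
        (Real.exp (2 / ε ^ 2) : ℝ) := by
    push_cast
    rw [← Complex.exp_add, ← Complex.exp_add, ← Complex.exp_add]
    congr 1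
    have hZd : ZZ ε v = 1 - ε * v * I := rfl
    have hquad : (ZZ ε v) ^ 2 = 2 * ZZ ε v - 1 - ε ^ 2 * v ^ 2 := by
      rw [hZd]; ring_nf; rw [I_sq]; ring
    have h1 : ZZ ε v = 2 - (1 + ε ^ 2 * v ^ 2) * (ZZ ε v)⁻¹ := by
      field_simp; linear_combination hquad
    have h2 : ZZ ε v / ε ^ 2 = 2 / ε ^ 2 - (ZZ ε v)⁻¹ / ε ^ 2 - v ^ 2 * (ZZ ε v)⁻¹ := by
      conv_lhs => rw [h1]
      field_simp
      ring
    rw [h2]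
    field_simp
    ring
  rw [HH, PF_transform hw, hs, hq]
  have hden : ((ε * √(π / 12) : ℝ) : ℂ) ≠ 0 := by
    exact_mod_cast (by positivity : ε * √(π / 12) ≠ 0)
  have hden2 : ((Real.exp (2 / ε ^ 2) : ℝ) : ℂ) ≠ 0 := by
    exact_mod_cast (Real.exp_pos _).ne'
  rw [ofReal_mul (ε * √(π / 12)), div_eq_iff (mul_ne_zero hden hden2)]
  linear_combination (((ε * √(π / 12) : ℝ) : ℂ) * sqrt (ZZ ε v) *
    PF (cexp (-((24 / ε ^ 2 : ℝ) * (ZZ ε v)⁻¹)))) * hx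

lemma HH_continuous {ε : ℝ} (hε : 0 < ε) : Continuous (HH ε) := by
  unfold HH
  have hZ : Continuous (fun v => ZZ ε v) := by unfold ZZ; fun_prop
  have h1 : Continuous fun v => PF (cexp (-((π ^ 2 * ε ^ 2 / 6 : ℝ) * ZZ ε v))) := by
    refine PF_exp_continuous (by fun_prop) fun v => ?_
    rw [re_ofReal_mul, ZZ_re]; positivity
  exact (h1.mul (by fun_prop)).div_const _

lemma tendsto_inv_sq_aux {c : ℝ} (hc : 0 < c) : Tendsto (fun ε : ℝ => c / ε ^ 2) (𝓝[>] 0) atTop := by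
  have h : Tendsto (fun ε : ℝ => ε⁻¹) (𝓝[>] 0) atTop := tendsto_inv_nhdsGT_zero
  have h2 := ((tendsto_pow_atTop (two_ne_zero)).comp h).const_mul_atTop hc
  refine h2.congr fun ε => ?_
  simp [div_eq_mul_inv]

lemma HH_tendsto (v : ℝ) : Tendsto (fun ε => HH ε v) (𝓝[>] 0) (𝓝 (Real.exp (-v ^ 2) : ℝ)) := by
  have hZc : Continuous fun ε : ℝ => ZZ ε v := by unfold ZZ; fun_prop
  have hZ0 : ZZ 0 v = 1 := by simp [ZZ]
  have hZ : Tendsto (fun ε : ℝ => ZZ ε v) (𝓝[>] 0) (𝓝 1) := by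
    rw [← hZ0]; exact (hZc.tendsto 0).mono_left nhdsWithin_le_nhds
  have a1 : Tendsto (fun ε : ℝ => sqrt (ZZ ε v)) (𝓝[>] 0) (𝓝 1) := by
    have : ContinuousAt sqrt (1 : ℂ) :=
      (differentiableAt_sqrt (by simp)).continuousAt
    have := this.tendsto.comp hZ
    simpa [Function.comp_def] using this
  have a2 : Tendsto (fun ε : ℝ => cexp (-(v ^ 2 * (ZZ ε v)⁻¹))) (𝓝[>] 0)
      (𝓝 (Real.exp (-v ^ 2) : ℝ)) := by
    have := ((hZ.inv₀ one_ne_zero).const_mul ((v : ℂ) ^ 2)).neg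
    have := (Complex.continuous_exp.tendsto _).comp this
    simpa [Function.comp_def] using this
  have a3 : Tendsto (fun ε : ℝ => cexp (-((π ^ 2 * ε ^ 2 / 144 : ℝ) * ZZ ε v))) (𝓝[>] 0) (𝓝 1) := by
    have hc : Continuous fun ε : ℝ => cexp (-((π ^ 2 * ε ^ 2 / 144 : ℝ) * ZZ ε v)) := by fun_prop
    have := (hc.tendsto 0).mono_left (nhdsWithin_le_nhds (s := Set.Ioi 0))
    simpa using this
  have a4 : Tendsto (fun ε : ℝ => PF (cexp (-((24 / ε ^ 2 : ℝ) * (ZZ ε v)⁻¹)))) (𝓝[>] 0) (𝓝 1) := by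
    have hP : ContinuousAt PF 0 := PF_continuousAt (by simp)
    have hP' := hP.tendsto
    rw [PF_zero] at hP'
    refine hP'.comp ?_
    rw [tendsto_zero_iff_norm_tendsto_zero]
    have e : ∀ ε : ℝ, ‖cexp (-((24 / ε ^ 2 : ℝ) * (ZZ ε v)⁻¹))‖
        = Real.exp (-(24 / ε ^ 2 * (1 / (1 + (ε * v) ^ 2)))) := by
      intro ε
      rw [Complex.norm_exp, neg_re, re_ofReal_mul, ZZ_inv_re]
    simp_rw [e]
    refine Real.tendsto_exp_neg_atTop_nhds_zero.comp ?_
    refine (tendsto_inv_sq_aux (by norm_num : (0:ℝ) < 24)).atTop_mul_pos (C := 1) one_pos ?_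
    have hc : Continuous fun ε : ℝ => 1 / (1 + (ε * v) ^ 2) := by
      refine continuous_const.div (by fun_prop) fun ε => by positivity
    have := (hc.tendsto 0).mono_left (nhdsWithin_le_nhds (s := Set.Ioi 0))
    simpa using this
  have := ((a1.mul a2).mul a3).mul a4
  simp only [one_mul, mul_one] at this
  refine this.congr' ?_
  filter_upwards [self_mem_nhdsWithin] with ε hε
  rw [HH_eq hε]

lemma minor_tendsto : Tendsto (fun ε : ℝ => 2 / (ε * √(π / 12)) *
    Real.exp (-(3 / (4 * π ^ 2) / ε ^ 2)) * (1 + RR ε ^ 2)) (𝓝[>] 0) (𝓝 0) := by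
  have hc : 0 < 3 / (4 * π ^ 2) := by positivity
  set c := 3 / (4 * π ^ 2)
  have h : Tendsto (fun ε : ℝ => ε⁻¹) (𝓝[>] 0) atTop := tendsto_inv_nhdsGT_zero
  -- as x = 1/ε → ∞: x^k exp(-c x^2) → 0
  have key : ∀ k : ℕ, Tendsto (fun x : ℝ => x ^ k * Real.exp (-(c * x ^ 2))) atTop (𝓝 0) := by
    intro k
    have h1 : Tendsto (fun x : ℝ => x ^ k * Real.exp (-c * x)) atTop (𝓝 0) := by
      have := Real.tendsto_pow_mul_exp_neg_atTop_nhds_zero k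
      have h2 := (this.comp (tendsto_id.const_mul_atTop hc)).const_mul ((c ^ k)⁻¹)
      rw [mul_zero] at h2
      refine h2.congr fun x => ?_
      simp only [Function.comp, id]
      rw [mul_pow]; field_simp
    refine squeeze_zero' (g := fun x : ℝ => x ^ k * Real.exp (-c * x)) ?_ ?_ h1
    · filter_upwards [eventually_ge_atTop 0] with x hx
      positivity
    · filter_upwards [eventually_ge_atTop 1] with x hx
      gcongr
      have : x ≤ x ^ 2 := by nlinarith
      nlinarith
  have h3 := (((key 1).const_mul (2 / √(π / 12))).add
    ((key 7).const_mul (2 / √(π / 12) * (6 / π) ^ 2))).comp h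
  simp only [mul_zero, add_zero] at h3
  refine h3.congr' ?_
  filter_upwards [self_mem_nhdsWithin] with ε (hε : 0 < ε)
  have hs : 0 < √(π / 12) := by positivity
  simp only [Function.comp, RR]
  rw [show -(c * ε⁻¹ ^ 2) = -(c / ε ^ 2) by field_simp]
  field_simp

lemma HH_bound : ∀ᶠ ε in 𝓝[>] (0 : ℝ), ∀ v : ℝ,
    ‖(Set.Ioc (-RR ε) (RR ε)).indicator (HH ε) v‖ ≤
      2 * (2 + 2 * π) * Real.exp (-(1 / (1 + (2 * π) ^ 2)) * v ^ 2) + (1 + v ^ 2)⁻¹ := by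
  obtain ⟨δ, hδ, hP⟩ := PF_small
  obtain ⟨t₀, ht₀, hM⟩ := minor_bound
  have b1 : ∀ᶠ ε in 𝓝[>] (0 : ℝ), π ^ 2 * ε ^ 2 / 6 < t₀ := by
    have hc : Continuous fun ε : ℝ => π ^ 2 * ε ^ 2 / 6 := by fun_prop
    have := (hc.tendsto 0).mono_left (nhdsWithin_le_nhds (s := Set.Ioi 0))
    refine this.eventually (gt_mem_nhds ?_)
    simpa using ht₀
  have b2 : ∀ᶠ ε in 𝓝[>] (0 : ℝ), Real.exp (-(24 / (1 + (2 * π) ^ 2) / ε ^ 2)) < δ := by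
    have := Real.tendsto_exp_neg_atTop_nhds_zero.comp
      (tendsto_inv_sq_aux (by positivity : (0:ℝ) < 24 / (1 + (2 * π) ^ 2)))
    exact this.eventually (gt_mem_nhds hδ)
  have b3 := minor_tendsto.eventually (gt_mem_nhds one_pos)
  filter_upwards [b1, b2, b3, self_mem_nhdsWithin] with ε h1 h2 h3 hε v
  have hε : 0 < ε := hε
  by_cases hv : v ∈ Set.Ioc (-RR ε) (RR ε)
  swap
  · rw [Set.indicator_of_notMem hv, norm_zero]; positivity
  rw [Set.indicator_of_mem hv]
  have hvR : |v| ≤ RR ε := abs_le.2 ⟨hv.1.le, hv.2⟩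
  by_cases hmaj : |ε * v| ≤ 2 * π
  · -- major arc
    have hsq : (ε * v) ^ 2 ≤ (2 * π) ^ 2 := sq_le_sq' (abs_le.1 hmaj).1 (abs_le.1 hmaj).2
    have hfr : 1 / (1 + (2 * π) ^ 2) ≤ 1 / (1 + (ε * v) ^ 2) := by gcongr
    refine le_trans ?_ (le_add_of_nonneg_right (by positivity))
    rw [HH_eq hε, norm_mul, norm_mul, norm_mul]
    have n1 : ‖sqrt (ZZ ε v)‖ ≤ 2 + 2 * π := by
      have hs := congrArg norm (csqrt_sq (ZZ ε v))
      rw [norm_pow] at hs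
      have hz : ‖ZZ ε v‖ ≤ 1 + 2 * π := by
        have := Complex.norm_le_abs_re_add_abs_im (ZZ ε v)
        rw [ZZ_re, ZZ_im, abs_neg, abs_one] at this
        linarith
      nlinarith [sq_nonneg (‖sqrt (ZZ ε v)‖ - 1), norm_nonneg (sqrt (ZZ ε v))]
    have n2 : ‖cexp (-(v ^ 2 * (ZZ ε v)⁻¹))‖ ≤ Real.exp (-(1 / (1 + (2 * π) ^ 2)) * v ^ 2) := by
      rw [Complex.norm_exp, Real.exp_le_exp, neg_re, show (v : ℂ) ^ 2 = ((v ^ 2 : ℝ) : ℂ) by push_cast; rfl,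
        re_ofReal_mul, ZZ_inv_re]
      nlinarith [sq_nonneg v]
    have n3 : ‖cexp (-((π ^ 2 * ε ^ 2 / 144 : ℝ) * ZZ ε v))‖ ≤ 1 := by
      rw [Complex.norm_exp, Real.exp_le_one_iff, neg_re, re_ofReal_mul, ZZ_re]
      have : 0 ≤ π ^ 2 * ε ^ 2 / 144 := by positivity
      linarith
    have n4 : ‖PF (cexp (-((24 / ε ^ 2 : ℝ) * (ZZ ε v)⁻¹)))‖ ≤ 2 := by
      apply hP
      refine lt_of_le_of_lt ?_ h2
      rw [Complex.norm_exp, Real.exp_le_exp, neg_re, re_ofReal_mul, ZZ_inv_re]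
      have : 24 / (1 + (2 * π) ^ 2) / ε ^ 2 = 24 / ε ^ 2 * (1 / (1 + (2 * π) ^ 2)) := by
        field_simp
      rw [this]
      gcongr
    calc _ ≤ (2 + 2 * π) * Real.exp (-(1 / (1 + (2 * π) ^ 2)) * v ^ 2) * 1 * 2 := by gcongr
      _ = _ := by ring
  · -- minor arc
    push Not at hmaj
    refine le_trans ?_ (le_add_of_nonneg_left (by positivity))
    set t := π ^ 2 * ε ^ 2 / 6 with ht
    have htpos : 0 < t := by positivity
    have hm := hM t (t * (ε * v)) htpos h1 (by
        rw [abs_mul, abs_of_pos htpos]; nlinarith) (by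
        rw [abs_mul, abs_mul, abs_of_pos htpos, abs_of_pos hε]
        calc t * (ε * |v|) ≤ t * (ε * RR ε) := by gcongr
          _ = π := by rw [ht, RR]; field_simp)
    have e1 : ((t : ℂ) - ((t * (ε * v) : ℝ) : ℂ) * I) = (t : ℂ) * ZZ ε v := by
      rw [ZZ]; push_cast; ring
    rw [e1] at hm
    have n1 : ‖cexp (ZZ ε v / ε ^ 2)‖ = Real.exp (1 / ε ^ 2) := by
      rw [Complex.norm_exp, show (ε : ℂ) ^ 2 = ((ε ^ 2 : ℝ) : ℂ) by push_cast; rfl, div_ofReal_re, ZZ_re]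
    rw [HH, norm_div, norm_mul, n1, norm_real, Real.norm_eq_abs, abs_of_pos (by positivity)]
    have e2 : 2 * Real.exp (π ^ 2 / (6 * t) - 1 / (8 * t)) * Real.exp (1 / ε ^ 2) /
        (ε * √(π / 12) * Real.exp (2 / ε ^ 2)) =
        2 / (ε * √(π / 12)) * Real.exp (-(3 / (4 * π ^ 2) / ε ^ 2)) := by
      have : π ^ 2 / (6 * t) - 1 / (8 * t) = -(3 / (4 * π ^ 2) / ε ^ 2) + 2 / ε ^ 2 - 1 / ε ^ 2 := by
        rw [ht]; field_simp; ring
      rw [this, Real.exp_sub, Real.exp_add]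
      field_simp
    calc _ ≤ 2 * Real.exp (π ^ 2 / (6 * t) - 1 / (8 * t)) * Real.exp (1 / ε ^ 2) /
        (ε * √(π / 12) * Real.exp (2 / ε ^ 2)) := by gcongr
      _ = 2 / (ε * √(π / 12)) * Real.exp (-(3 / (4 * π ^ 2) / ε ^ 2)) := e2
      _ ≤ (1 + v ^ 2)⁻¹ := by
        rw [← one_div, le_div_iff₀ (by positivity)]
        refine le_trans ?_ h3.le
        have : v ^ 2 ≤ RR ε ^ 2 := sq_le_sq' (abs_le.1 hvR).1 (abs_le.1 hvR).2
        gcongr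

lemma JJ_tendsto : Tendsto JJ (𝓝[>] 0) (𝓝 (√π : ℝ)) := by
  have hint : ∫ v : ℝ, ((Real.exp (-v ^ 2) : ℝ) : ℂ) = (√π : ℝ) := by
    rw [integral_complex_ofReal]
    have := integral_gaussian 1
    simp only [neg_mul, one_mul, div_one] at this
    rw [this]
  rw [← hint]
  unfold JJ
  refine tendsto_integral_filter_of_dominated_convergence
    (fun v => 2 * (2 + 2 * π) * Real.exp (-(1 / (1 + (2 * π) ^ 2)) * v ^ 2) + (1 + v ^ 2)⁻¹)
    ?_ ?_ ?_ ?_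
  · filter_upwards [self_mem_nhdsWithin] with ε hε
    exact (HH_continuous hε).aestronglyMeasurable.indicator measurableSet_Ioc
  · filter_upwards [HH_bound] with ε hε
    exact Eventually.of_forall hε
  · exact ((integrable_exp_neg_mul_sq (by positivity)).const_mul _).add integrable_inv_one_add_sq
  · refine Eventually.of_forall fun v => ?_
    refine (HH_tendsto v).congr' ?_
    have hR : Tendsto RR (𝓝[>] 0) atTop := by
      have h : Tendsto (fun ε : ℝ => ε⁻¹) (𝓝[>] 0) atTop := tendsto_inv_nhdsGT_zero
      have h2 := ((tendsto_pow_atTop (three_ne_zero)).comp h).const_mul_atTop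
        (by positivity : 0 < 6 / π)
      refine h2.congr fun ε => ?_
      simp only [RR, Function.comp]
      rw [inv_pow, ← div_eq_mul_inv, div_div]
    filter_upwards [hR.eventually_gt_atTop |v|] with ε hε
    rw [Set.indicator_of_mem]
    exact ⟨(abs_lt.1 hε).1, (abs_lt.1 hε).2.le⟩

lemma main_identity (n : ℕ) {ε : ℝ} (hε : 0 < ε) (hn : (n : ℝ) = 6 / (π ^ 2 * ε ^ 4)) :
    (((partitionCount n : ℝ) / hardyRamanujanL n : ℝ) : ℂ) = ((1 / √π : ℝ) : ℂ) * JJ ε := by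
  have hp : (π : ℂ) ≠ 0 := by exact_mod_cast Real.pi_ne_zero
  have hε' : (ε : ℂ) ≠ 0 := by exact_mod_cast hε.ne'
  have hnC : (n : ℂ) = 6 / (π ^ 2 * ε ^ 4) := by
    have := congrArg (fun x : ℝ => (x : ℂ)) hn
    push_cast at this; exact this
  have hR : 0 < RR ε := by unfold RR; positivity
  set s : ℝ := π ^ 2 * ε ^ 3 / 6 with hs
  have hsR : s * RR ε = π := by rw [hs, RR]; field_simp
  have hD : (0:ℝ) < ε * √(π / 12) * Real.exp (2 / ε ^ 2) := by positivity
  have hC := cauchy_formula n (π ^ 2 * ε ^ 2 / 6) (by positivity)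
  have hsub := intervalIntegral.smul_integral_comp_mul_left (a := -RR ε) (b := RR ε)
    (fun θ : ℝ => PF (cexp (-(((π ^ 2 * ε ^ 2 / 6 : ℝ) : ℂ) - θ * I))) *
      cexp (n * (((π ^ 2 * ε ^ 2 / 6 : ℝ) : ℂ) - θ * I))) s
  rw [mul_neg, hsR] at hsub
  have hJ : ∫ v in (-RR ε)..(RR ε), PF (cexp (-(((π ^ 2 * ε ^ 2 / 6 : ℝ) : ℂ) - (s * v : ℝ) * I))) *
      cexp (n * (((π ^ 2 * ε ^ 2 / 6 : ℝ) : ℂ) - (s * v : ℝ) * I))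
      = ((ε * √(π / 12) * Real.exp (2 / ε ^ 2) : ℝ) : ℂ) * JJ ε := by
    rw [JJ, integral_indicator measurableSet_Ioc, intervalIntegral.integral_of_le (by linarith),
      ← integral_const_mul]
    congr 1
    ext v
    have e1 : (((π ^ 2 * ε ^ 2 / 6 : ℝ) : ℂ) - (s * v : ℝ) * I) = ((π ^ 2 * ε ^ 2 / 6 : ℝ) : ℂ) * ZZ ε v := by
      rw [ZZ, hs]; push_cast; ring
    have e2 : (n : ℂ) * (((π ^ 2 * ε ^ 2 / 6 : ℝ) : ℂ) * ZZ ε v) = ZZ ε v / ε ^ 2 := by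
      rw [hnC]; push_cast; field_simp
    rw [e1, e2, HH, mul_div_cancel₀]
    exact_mod_cast hD.ne'
  rw [hJ] at hsub
  rw [← hsub] at hC
  have hL : hardyRamanujanL n = π ^ 2 * ε ^ 4 / (24 * √3) * Real.exp (2 / ε ^ 2) := by
    unfold hardyRamanujanL
    rw [hn]
    have : √(2 * (6 / (π ^ 2 * ε ^ 4)) / 3) = 2 / (π * ε ^ 2) := by
      rw [show 2 * (6 / (π ^ 2 * ε ^ 4)) / 3 = (2 / (π * ε ^ 2)) ^ 2 by field_simp; norm_num]
      exact Real.sqrt_sq (by positivity)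
    rw [this]
    congr 1
    · field_simp; norm_num
    · congr 1; field_simp
  have hreal : 1 / (2 * π) * (s * (ε * √(π / 12) * Real.exp (2 / ε ^ 2))) =
      hardyRamanujanL n * (1 / √π) := by
    have h12 : √(π / 12) = √π / (2 * √3) := by
      rw [Real.sqrt_div Real.pi_pos.le, show (12 : ℝ) = 2 ^ 2 * 3 by norm_num,
        Real.sqrt_mul (by norm_num), Real.sqrt_sq (by norm_num)]
    rw [hL, h12, hs]
    have h1 : √π ^ 2 = π := Real.sq_sqrt Real.pi_pos.le
    have h2 : √π ≠ 0 := by positivity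
    field_simp
    rw [h1]; ring
  have hL0 : (hardyRamanujanL n : ℂ) ≠ 0 := by
    have : 0 < hardyRamanujanL n := by rw [hL]; positivity
    exact_mod_cast this.ne'
  have hrC := congrArg (fun x : ℝ => (x : ℂ)) hreal
  rw [ofReal_div, div_eq_iff hL0, ofReal_natCast, hC, Complex.real_smul]
  push_cast at hrC ⊢
  linear_combination (JJ ε) * hrC

end L4

/-- The Hardy–Ramanujan asymptotic: `p(n)/L(n) → 1` as `n → ∞`. -/
theorem hardy_ramanujan_asymptotic :
    Filter.Tendsto (fun n : ℕ => (partitionCount n : ℝ) / hardyRamanujanL n)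
      Filter.atTop (nhds 1) := by
  have h1 : Filter.Tendsto (fun n : ℕ => √√(6 / (π ^ 2 * n))) Filter.atTop (nhdsWithin 0 (Set.Ioi 0)) := by
    refine tendsto_nhdsWithin_iff.2 ⟨?_, ?_⟩
    · have hc : Filter.Tendsto (fun n : ℕ => 6 / π ^ 2 / (n : ℝ)) Filter.atTop (nhds 0) :=
        tendsto_const_div_atTop_nhds_zero_nat _
      have := (Real.continuous_sqrt.comp Real.continuous_sqrt).tendsto 0
      simp only [Function.comp, Real.sqrt_zero] at this
      refine (this.comp hc).congr fun n => ?_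
      simp only [Function.comp]
      rw [div_div]
    · filter_upwards [Filter.eventually_gt_atTop 0] with n hn
      have : (0 : ℝ) < n := by exact_mod_cast hn
      exact Real.sqrt_pos.2 (Real.sqrt_pos.2 (by positivity))
  have h2 := (JJ_tendsto.comp h1).const_mul ((1 / √π : ℝ) : ℂ)
  have h3 : ((1 / √π : ℝ) : ℂ) * (√π : ℝ) = 1 := by
    have : √π ≠ 0 := by positivity
    rw [← Complex.ofReal_mul, one_div_mul_cancel this, Complex.ofReal_one]
  rw [h3] at h2
  have h4 : Filter.Tendsto (fun n : ℕ => (((partitionCount n : ℝ) / hardyRamanujanL n : ℝ) : ℂ))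
      Filter.atTop (nhds 1) := by
    refine h2.congr' ?_
    filter_upwards [Filter.eventually_gt_atTop 0] with n hn
    have hn' : (0 : ℝ) < n := by exact_mod_cast hn
    refine (main_identity n (Real.sqrt_pos.2 (Real.sqrt_pos.2 (by positivity))) ?_).symm
    have e : √√(6 / (π ^ 2 * n)) ^ 4 = 6 / (π ^ 2 * n) := by
      rw [show √√(6 / (π ^ 2 * n)) ^ 4 = (√√(6 / (π ^ 2 * n)) ^ 2) ^ 2 by ring, Real.sq_sqrt (Real.sqrt_nonneg _),
        Real.sq_sqrt (by positivity)]
    rw [e]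
    field_simp
  have h5 := (Complex.continuous_re.tendsto _).comp h4
  simpa only [Function.comp_def, Complex.ofReal_re, Complex.one_re] using h5
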